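/- arXiv:1604.08643 — 2 statements merged into one kernel-verified Lean document; each statement's English description precedes it below -/
import Mathlib

section
/- If a monic polynomial φ of degree m ≥ 2 minimizes the L^q norm on [a,b] among monic polynomials of degree m (1 ≤ q ≤ ∞), then all m roots of φ are real, simple, and lie in [a,b]. -/
open MeasureTheory Polynomial
open scoped ENNReal

lemma aux_memLp (a b : ℝ) (q : ℝ≥0∞) (p : Polynomial ℝ) :
    MemLp (fun x => p.eval x) q (volume.restrict (Set.Icc a b)) := by
  obtain ⟨G, hG⟩ := isCompact_Icc.exists_bound_of_continuousOn (s := Set.Icc a b)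
    (f := fun x => p.eval x) p.continuous.continuousOn
  refine MemLp.of_bound p.continuous.aestronglyMeasurable G ?_
  exact (ae_restrict_iff' measurableSet_Icc).2 (Filter.Eventually.of_forall hG)

lemma aux_ne_zero (a b : ℝ) (hab : a < b) (q : ℝ≥0∞) (hq : 1 ≤ q) (p : Polynomial ℝ)
    (hp : p ≠ 0) :
    eLpNorm (fun x => p.eval x) q (volume.restrict (Set.Icc a b)) ≠ 0 := by
  intro h
  rw [eLpNorm_eq_zero_iff p.continuous.aestronglyMeasurable
    (by rintro rfl; simp at hq)] at h
  have h1 : ∀ᵐ x ∂(volume : Measure ℝ), x ∈ Set.Icc a b → p.eval x = 0 :=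
    (ae_restrict_iff' measurableSet_Icc).1 h
  have h2 : ∀ᵐ x ∂(volume : Measure ℝ), x ∉ (p.roots.toFinset : Set ℝ) :=
    (Finset.measure_zero _ _ : volume (p.roots.toFinset : Set ℝ) = 0) |> measure_eq_zero_iff_ae_notMem.1
  have h3 : ∀ᵐ x ∂(volume : Measure ℝ), x ∉ Set.Icc a b := by
    filter_upwards [h1, h2] with x hx1 hx2 hx
    apply hx2
    simp [hp, hx1 hx]
  have h4 := measure_eq_zero_iff_ae_notMem.2 h3
  rw [Real.volume_Icc, ENNReal.ofReal_eq_zero] at h4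
  linarith

lemma aux_shrink (a b : ℝ) (hab : a < b) (m : ℕ) (q : ℝ≥0∞) (hq : 1 ≤ q)
    (φ : Polynomial ℝ) (hmonic : φ.Monic) (hdeg : φ.natDegree = m)
    (hmin : ∀ ψ : Polynomial ℝ, ψ.Monic → ψ.natDegree = m →
      eLpNorm (fun x => φ.eval x) q (volume.restrict (Set.Icc a b))
        ≤ eLpNorm (fun x => ψ.eval x) q (volume.restrict (Set.Icc a b)))
    (p p' g : Polynomial ℝ) (hφ : φ = p * g) (hp : p.Monic) (hp' : p'.Monic)
    (hpp : p'.natDegree = p.natDegree) (r : ℝ) (hr : r < 1)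
    (h : ∀ x ∈ Set.Icc a b, |p'.eval x| ≤ r * |p.eval x|) : False := by
  have hg : g.Monic := hp.of_mul_monic_left (hφ ▸ hmonic)
  have h1 := hmin (p' * g) (hp'.mul hg) (by
    rw [hp'.natDegree_mul hg, hpp, ← hp.natDegree_mul hg, ← hφ, hdeg])
  have h2 : eLpNorm (fun x => (p' * g).eval x) q (volume.restrict (Set.Icc a b))
      ≤ ENNReal.ofReal r * eLpNorm (fun x => φ.eval x) q (volume.restrict (Set.Icc a b)) := by
    apply eLpNorm_le_mul_eLpNorm_of_ae_le_mul
    refine (ae_restrict_iff' measurableSet_Icc).2 (Filter.Eventually.of_forall fun x hx => ?_)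
    have := h x hx
    simp only [hφ, eval_mul, Real.norm_eq_abs, abs_mul]
    nlinarith [abs_nonneg (g.eval x)]
  have h0 := aux_ne_zero a b hab q hq φ hmonic.ne_zero
  have ht := (aux_memLp a b q φ).eLpNorm_ne_top
  have h3 := h1.trans h2
  have h4 : ENNReal.ofReal r * eLpNorm (fun x => φ.eval x) q (volume.restrict (Set.Icc a b))
     < 1 * eLpNorm (fun x => φ.eval x) q (volume.restrict (Set.Icc a b)) := by
    rw [ENNReal.mul_lt_mul_iff_left h0 ht]
    simpa using hr
  rw [one_mul] at h4
  exact absurd h3 (not_le.2 h4)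

lemma aux_double (a b : ℝ) (hab : a < b) (m : ℕ) (q : ℝ≥0∞) (hq : 1 ≤ q)
    (φ : Polynomial ℝ) (hmonic : φ.Monic) (hdeg : φ.natDegree = m)
    (hmin : ∀ ψ : Polynomial ℝ, ψ.Monic → ψ.natDegree = m →
      eLpNorm (fun x => φ.eval x) q (volume.restrict (Set.Icc a b))
        ≤ eLpNorm (fun x => ψ.eval x) q (volume.restrict (Set.Icc a b)))
    (c : ℝ) (hc : c ∈ Set.Icc a b) (g : Polynomial ℝ) (hφ : φ = (X - C c) ^ 2 * g) : False := by
  have hp : ((X - C c) ^ 2 : ℝ[X]).Monic := (monic_X_sub_C c).pow 2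
  have hg : g.Monic := hp.of_mul_monic_left (hφ ▸ hmonic)
  have h0 := aux_ne_zero a b hab q hq φ hmonic.ne_zero
  have ht := (aux_memLp a b q φ).eLpNorm_ne_top
  obtain ⟨G, hG⟩ := isCompact_Icc.exists_bound_of_continuousOn (s := Set.Icc a b)
    (f := fun x => g.eval x) g.continuous.continuousOn
  simp only [Real.norm_eq_abs] at hG
  have hG0 : 0 ≤ G := (abs_nonneg _).trans (hG c hc)
  set μ := volume.restrict (Set.Icc a b) with hμ
  set M : ℝ := (b - a) ^ 2 with hM
  have hMpos : 0 < M := by rw [hM]; exact pow_pos (by linarith) 2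
  have hmin' : ∀ s : ℝ, eLpNorm (fun x => φ.eval x) q μ
      ≤ eLpNorm (fun x => (((X - C c) ^ 2 - C (s ^ 2)) * g).eval x) q μ := by
    intro s
    have hd : ((X - C c) ^ 2 : ℝ[X]).natDegree = 2 := by
      rw [natDegree_pow, natDegree_X_sub_C]
    have hlt : (C (s ^ 2) : ℝ[X]).degree < ((X - C c) ^ 2 : ℝ[X]).degree := by
      refine lt_of_le_of_lt degree_C_le ?_
      rw [degree_eq_natDegree hp.ne_zero, hd]; norm_num
    have hp' : ((X - C c) ^ 2 - C (s ^ 2) : ℝ[X]).Monic := hp.sub_of_left hlt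
    refine hmin _ (hp'.mul hg) ?_
    rw [hp'.natDegree_mul hg, natDegree_sub_C, ← hp.natDegree_mul hg, ← hφ, hdeg]
  have hpt1 : ∀ s : ℝ, 0 < s → ∀ x ∈ Set.Icc a b, s ≤ |x - c| →
      |(((X - C c) ^ 2 - C (s ^ 2)) * g).eval x| ≤ (1 - s ^ 2 / M) * |φ.eval x| := by
    intro s hs x hx hsx
    simp only [hφ, eval_mul, eval_sub, eval_pow, eval_X, eval_C, abs_mul]
    rw [← mul_assoc]
    refine mul_le_mul_of_nonneg_right ?_ (abs_nonneg _)
    have h1 : s ^ 2 ≤ (x - c) ^ 2 := by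
      rw [← sq_abs (x - c)]; gcongr
    have h2 : (x - c) ^ 2 ≤ M := by
      rw [hM]; apply sq_le_sq'
      · linarith [hx.1, hx.2, hc.1, hc.2]
      · linarith [hx.1, hx.2, hc.1, hc.2]
    rw [abs_of_nonneg (by linarith), abs_of_nonneg (sq_nonneg _)]
    have h3 : s ^ 2 / M * (x - c) ^ 2 ≤ s ^ 2 := by
      rw [div_mul_eq_mul_div, div_le_iff₀ hMpos]
      exact mul_le_mul_of_nonneg_left h2 (sq_nonneg _)
    linarith
  have hpt2 : ∀ s : ℝ, 0 < s → ∀ x ∈ Set.Icc a b, |x - c| < s →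
      |(((X - C c) ^ 2 - C (s ^ 2)) * g).eval x| ≤ s ^ 2 * G := by
    intro s hs x hx hsx
    simp only [eval_mul, eval_sub, eval_pow, eval_X, eval_C, abs_mul]
    refine mul_le_mul ?_ (hG x hx) (abs_nonneg _) (sq_nonneg _)
    have h1 : (x - c) ^ 2 ≤ s ^ 2 := by
      rw [← sq_abs (x - c)]; gcongr
    rw [abs_le]; constructor <;> nlinarith [sq_nonneg (x - c)]
  set N := (eLpNorm (fun x => φ.eval x) q μ).toReal with hN
  have hNpos : 0 < N := ENNReal.toReal_pos h0 ht
  have hNe : eLpNorm (fun x => φ.eval x) q μ = ENNReal.ofReal N := (ENNReal.ofReal_toReal ht).symm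
  by_cases hqt : q = ∞
  · subst hqt
    have hs : ∃ s : ℝ, 0 < s ∧ s ^ 2 < M ∧ s ^ 2 * G < N := by
      have e1 : ∀ᶠ s : ℝ in nhds 0, s ^ 2 < M :=
        (by fun_prop : Continuous fun s : ℝ => s ^ 2).continuousAt.eventually_lt
          continuousAt_const (by simpa using hMpos)
      have e2 : ∀ᶠ s : ℝ in nhds 0, s ^ 2 * G < N :=
        (by fun_prop : Continuous fun s : ℝ => s ^ 2 * G).continuousAt.eventually_lt
          continuousAt_const (by simpa using hNpos)
      obtain ⟨s, h, h'⟩ := (((e1.and e2).filter_mono nhdsWithin_le_nhds).and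
        (self_mem_nhdsWithin : ∀ᶠ s : ℝ in nhdsWithin 0 (Set.Ioi 0), s ∈ Set.Ioi (0:ℝ))).exists
      exact ⟨s, h', h.1, h.2⟩
    obtain ⟨s, hs, hsM, hsG⟩ := hs
    have h1 := hmin' s
    have hsM' : 0 < s ^ 2 / M := by positivity
    have hsM1 : s ^ 2 / M < 1 := by rwa [div_lt_one hMpos]
    have hlt : max ((1 - s ^ 2 / M) * N) (s ^ 2 * G) < N := by
      apply max_lt _ hsG
      nlinarith
    have hae : ∀ᵐ x ∂μ, |φ.eval x| ≤ N := by
      have := ae_le_eLpNormEssSup (f := fun x => φ.eval x) (μ := μ)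
      filter_upwards [this] with x hx
      rw [← eLpNorm_exponent_top, hNe, Real.enorm_eq_ofReal_abs] at hx
      exact (ENNReal.ofReal_le_ofReal_iff hNpos.le).1 hx
    have h2 : eLpNorm (fun x => (((X - C c) ^ 2 - C (s ^ 2)) * g).eval x) ∞ μ
        ≤ ENNReal.ofReal (max ((1 - s ^ 2 / M) * N) (s ^ 2 * G)) := by
      rw [eLpNorm_exponent_top]
      apply eLpNormEssSup_le_of_ae_bound
      filter_upwards [hae, ae_restrict_mem measurableSet_Icc] with x hx hxI
      rw [Real.norm_eq_abs]
      rcases le_or_gt s |x - c| with h | h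
      · refine (hpt1 s hs x hxI h).trans (le_trans ?_ (le_max_left _ _))
        exact mul_le_mul_of_nonneg_left hx (by linarith)
      · exact (hpt2 s hs x hxI h).trans (le_max_right _ _)
    have h3 := h1.trans h2
    rw [hNe, ENNReal.ofReal_le_ofReal_iff' ] at h3
    rcases h3 with h3 | h3 <;> linarith
  · have hq0 : q ≠ 0 := by rintro rfl; simp at hq
    have hqr : 0 < q.toReal := ENNReal.toReal_pos hq0 hqt
    have hqi : 0 < 1 / q.toReal := by positivity
    have hs : ∃ s : ℝ, 0 < s ∧ s ^ 2 < M ∧ G * (2 * s) ^ (1 / q.toReal) < N / M := by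
      have e1 : ∀ᶠ s : ℝ in nhds 0, s ^ 2 < M :=
        (by fun_prop : Continuous fun s : ℝ => s ^ 2).continuousAt.eventually_lt
          continuousAt_const (by simpa using hMpos)
      have hcont : Continuous fun s : ℝ => G * (2 * s) ^ (1 / q.toReal) :=
        continuous_const.mul ((continuous_const.mul continuous_id).rpow_const
          (fun _ => Or.inr hqi.le))
      have e2 : ∀ᶠ s : ℝ in nhds 0, G * (2 * s) ^ (1 / q.toReal) < N / M :=
        hcont.continuousAt.eventually_lt
          continuousAt_const (by
            rw [mul_zero, Real.zero_rpow hqi.ne', mul_zero]; positivity)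
      obtain ⟨s, h, h'⟩ := (((e1.and e2).filter_mono nhdsWithin_le_nhds).and
        (self_mem_nhdsWithin : ∀ᶠ s : ℝ in nhdsWithin 0 (Set.Ioi 0), s ∈ Set.Ioi (0:ℝ))).exists
      exact ⟨s, h', h.1, h.2⟩
    obtain ⟨s, hs, hsM, hsG⟩ := hs
    have h1 := hmin' s
    have hsM' : 0 < s ^ 2 / M := by positivity
    have hsM1 : s ^ 2 / M < 1 := by rwa [div_lt_one hMpos]
    set S := Set.Icc (c - s) (c + s) with hS
    have h2 : eLpNorm (fun x => (((X - C c) ^ 2 - C (s ^ 2)) * g).eval x) q μ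
        ≤ eLpNorm ((fun x => (1 - s ^ 2 / M) * |φ.eval x|) +
            S.indicator (fun _ => s ^ 2 * G)) q μ := by
      apply eLpNorm_mono_ae_real
      filter_upwards [ae_restrict_mem measurableSet_Icc] with x hxI
      rw [Real.norm_eq_abs, Pi.add_apply]
      have hn1 : 0 ≤ (1 - s ^ 2 / M) * |φ.eval x| :=
        mul_nonneg (by linarith) (abs_nonneg _)
      have hn2 : 0 ≤ S.indicator (fun _ => s ^ 2 * G) x :=
        Set.indicator_nonneg (fun _ _ => by positivity) x
      rcases le_or_gt s |x - c| with h | h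
      · linarith [hpt1 s hs x hxI h]
      · have hxS : x ∈ S := by
          rw [abs_lt] at h
          exact ⟨by linarith [h.1], by linarith [h.2]⟩
        have := hpt2 s hs x hxI h
        rw [Set.indicator_of_mem hxS] at *
        linarith
    have h3 : eLpNorm ((fun x => (1 - s ^ 2 / M) * |φ.eval x|) +
            S.indicator (fun _ => s ^ 2 * G)) q μ ≤
        eLpNorm (fun x => (1 - s ^ 2 / M) * |φ.eval x|) q μ +
            eLpNorm (S.indicator (fun _ => s ^ 2 * G)) q μ := by
      apply eLpNorm_add_le _ _ hq
      · exact (continuous_const.mul φ.continuous.abs).aestronglyMeasurable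
      · exact aestronglyMeasurable_const.indicator measurableSet_Icc
    have h4 : eLpNorm (fun x => (1 - s ^ 2 / M) * |φ.eval x|) q μ
        ≤ ENNReal.ofReal (1 - s ^ 2 / M) * ENNReal.ofReal N := by
      rw [← hNe]
      apply eLpNorm_le_mul_eLpNorm_of_ae_le_mul
      refine Filter.Eventually.of_forall fun x => ?_
      simp only [Real.norm_eq_abs, abs_mul, abs_abs]
      rw [abs_of_nonneg (by linarith : 0 ≤ 1 - s ^ 2 / M)]
    have h5 : eLpNorm (S.indicator (fun _ => s ^ 2 * G)) q μ
        ≤ ENNReal.ofReal (s ^ 2 * G * (2 * s) ^ (1 / q.toReal)) := by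
      refine (eLpNorm_indicator_const_le _ _).trans ?_
      rw [ENNReal.ofReal_mul (by positivity), Real.enorm_eq_ofReal (by positivity),
        ← ENNReal.ofReal_rpow_of_nonneg (by positivity) hqi.le]
      gcongr
      refine (Measure.restrict_apply_le _ _).trans ?_
      rw [hS, Real.volume_Icc]
      apply ENNReal.ofReal_le_ofReal
      linarith
    have h6 := h1.trans (h2.trans (h3.trans (add_le_add h4 h5)))
    rw [hNe, ← ENNReal.ofReal_mul (by linarith), ← ENNReal.ofReal_add
      (mul_nonneg (by linarith) hNpos.le) (by positivity), ENNReal.ofReal_le_ofReal_iff'] at h6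
    rcases h6 with h6 | h6
    · have h7 : s ^ 2 * (G * (2 * s) ^ (1 / q.toReal)) < s ^ 2 * (N / M) :=
        mul_lt_mul_of_pos_left hsG (by positivity)
      have h8 : s ^ 2 * (N / M) = s ^ 2 / M * N := by ring
      linarith
    · linarith

/-- If a monic polynomial of degree `m ≥ 2` minimizes the `L^q` norm on `[a,b]` among all
monic polynomials of degree `m`, then all its `m` roots are real, simple, and lie in `[a,b]`. -/
theorem minimizing_monic_poly_roots
    (a b : ℝ) (hab : a < b) (m : ℕ) (hm : 2 ≤ m) (q : ℝ≥0∞) (hq : 1 ≤ q)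
    (φ : Polynomial ℝ) (hmonic : φ.Monic) (hdeg : φ.natDegree = m)
    (hmin : ∀ ψ : Polynomial ℝ, ψ.Monic → ψ.natDegree = m →
      eLpNorm (fun x => φ.eval x) q (volume.restrict (Set.Icc a b))
        ≤ eLpNorm (fun x => ψ.eval x) q (volume.restrict (Set.Icc a b))) :
    ∃ t : Fin m → ℝ, StrictMono t ∧ (∀ i, t i ∈ Set.Icc a b) ∧
      φ = ∏ i : Fin m, (Polynomial.X - Polynomial.C (t i)) := by
  have hne := hmonic.ne_zero
  have shrink := aux_shrink a b hab m q hq φ hmonic hdeg hmin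
  -- real roots lie in the interval
  have hroot : ∀ c, φ.IsRoot c → c ∈ Set.Icc a b := by
    intro c hc
    obtain ⟨g, hg⟩ := dvd_iff_isRoot.2 hc
    by_contra hcI
    rw [Set.mem_Icc, not_and_or, not_le, not_le] at hcI
    rcases hcI with h | h
    · refine shrink (X - C c) (X - C a) g hg (monic_X_sub_C _) (monic_X_sub_C _) (by simp)
        ((b - a) / (b - c)) ((div_lt_one (by linarith)).2 (by linarith)) ?_
      intro x hx
      simp only [eval_sub, eval_X, eval_C]
      rw [abs_of_nonneg (by linarith [hx.1]), abs_of_nonneg (by linarith [hx.1]),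
        div_mul_eq_mul_div, le_div_iff₀ (by linarith)]
      nlinarith [hx.1, hx.2]
    · refine shrink (X - C c) (X - C b) g hg (monic_X_sub_C _) (monic_X_sub_C _) (by simp)
        ((b - a) / (c - a)) ((div_lt_one (by linarith)).2 (by linarith)) ?_
      intro x hx
      simp only [eval_sub, eval_X, eval_C]
      rw [abs_of_nonpos (by linarith [hx.2]), abs_of_nonpos (by linarith [hx.2]),
        div_mul_eq_mul_div, le_div_iff₀ (by linarith)]
      nlinarith [hx.1, hx.2]
  -- complex roots are real
  have hcomplex : ∀ z : ℂ, aeval z φ = 0 → z.im = 0 := by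
    intro z hz
    by_contra him
    obtain ⟨g, hg⟩ := φ.quadratic_dvd_of_aeval_eq_zero_im_ne_zero hz him
    set v := z.im ^ 2 with hv
    have hvpos : 0 < v := by positivity
    have hnorm : ‖z‖ ^ 2 = z.re ^ 2 + v := by
      rw [Complex.sq_norm, Complex.normSq_apply, hv]; ring
    have key : ∀ w : ℝ, (X ^ 2 - C (2 * z.re) * X + C (z.re ^ 2 + w) : ℝ[X]).Monic ∧
        (X ^ 2 - C (2 * z.re) * X + C (z.re ^ 2 + w) : ℝ[X]).natDegree = 2 := by
      intro w
      constructor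
      · monicity!
      · compute_degree!
    rw [hnorm] at hg
    obtain ⟨K, hK⟩ := isCompact_Icc.exists_bound_of_continuousOn (s := Set.Icc a b)
      (f := fun x => (x - z.re) ^ 2) (by fun_prop)
    have hK0 : 0 ≤ K := (norm_nonneg _).trans (hK a ⟨le_rfl, hab.le⟩)
    refine shrink _ (X ^ 2 - C (2 * z.re) * X + C (z.re ^ 2 + v / 2)) g hg (key _).1 (key _).1
      (by rw [(key _).2, (key _).2]) ((K + v / 2) / (K + v))
      ((div_lt_one (by linarith)).2 (by linarith)) ?_
    intro x hx
    have hKx := hK x hx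
    rw [Real.norm_eq_abs, abs_of_nonneg (sq_nonneg _)] at hKx
    have e : ∀ w : ℝ, (X ^ 2 - C (2 * z.re) * X + C (z.re ^ 2 + w) : ℝ[X]).eval x
        = (x - z.re) ^ 2 + w := by
      intro w
      simp only [eval_add, eval_sub, eval_mul, eval_pow, eval_X, eval_C]; ring
    rw [e, e, abs_of_nonneg (by positivity), abs_of_nonneg (by positivity),
        div_mul_eq_mul_div, le_div_iff₀ (by linarith)]
    nlinarith
  have hsplit : φ.Splits := by
    rw [splits_iff_splits]
    right
    intro f hf hfd
    obtain ⟨z, hz⟩ := IsAlgClosed.exists_aeval_eq_zero ℂ f (degree_pos_of_irreducible hf).ne'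
    have him : z.im = 0 := by
      apply hcomplex
      obtain ⟨k, rfl⟩ := hfd
      simp [hz]
    have hzr : z = ((z.re : ℝ) : ℂ) := Complex.ext (by simp) (by simp [him])
    refine degree_eq_one_of_irreducible_of_root (x := z.re) hf ?_
    rw [hzr] at hz
    have := aeval_algebraMap_apply ℂ z.re f
    rw [Complex.coe_algebraMap, hz] at this
    simpa using this.symm
  have hnodup : φ.roots.Nodup := by
    rw [Multiset.nodup_iff_count_le_one]
    intro c
    by_contra hcount
    rw [not_le, count_roots] at hcount
    have hdvd : (X - C c) ^ 2 ∣ φ := (le_rootMultiplicity_iff hne).1 hcount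
    obtain ⟨g, hg⟩ := hdvd
    have hc : φ.IsRoot c := by
      rw [hg]; simp
    exact aux_double a b hab m q hq φ hmonic hdeg hmin c (hroot c hc) g hg
  have hcard : φ.roots.toFinset.card = m := by
    rw [Multiset.toFinset_card_of_nodup hnodup, ← hsplit.natDegree_eq_card_roots, hdeg]
  refine ⟨φ.roots.toFinset.orderEmbOfFin hcard, OrderEmbedding.strictMono _, ?_, ?_⟩
  · intro i
    have := Finset.orderEmbOfFin_mem φ.roots.toFinset hcard i
    rw [Multiset.mem_toFinset, mem_roots hne] at this
    exact hroot _ this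
  · have h1 : ∏ i : Fin m, (X - C (φ.roots.toFinset.orderEmbOfFin hcard i))
        = ∏ c ∈ φ.roots.toFinset, (X - C c) := by
      conv_rhs => rw [← Finset.image_orderEmbOfFin_univ φ.roots.toFinset hcard]
      rw [Finset.prod_image]
      · exact fun x _ y _ h => (φ.roots.toFinset.orderEmbOfFin hcard).injective h
    rw [h1, Finset.prod_eq_multiset_prod, Multiset.toFinset_val, hnodup.dedup]
    exact hsplit.eq_prod_roots_of_monic hmonic
end

section
/- The total variation of the polynomial x ↦ 2^{1-2n}(b-a)^n [T_n((2x-a-b)/(b-a)) − 1] on [a,b] equals 2^{2-2n}(b-a)^n n. -/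
open Polynomial

theorem evar_congr_edist (f g : ℝ → ℝ) (s : Set ℝ)
    (h : ∀ x ∈ s, ∀ y ∈ s, edist (f x) (f y) = edist (g x) (g y)) :
    eVariationOn f s = eVariationOn g s := by
  unfold eVariationOn
  refine iSup_congr fun p => Finset.sum_congr rfl fun i _ => ?_
  exact h _ (p.2.2.2 _) _ (p.2.2.2 _)

theorem evar_piece (c : ℝ) (hc : 0 ≤ c) (n : ℕ) (hn : 1 ≤ n) (i : ℕ) :
    eVariationOn (fun t : ℝ => c * (Real.cos (n * t) - 1))
      (Set.Icc (i * (Real.pi / n)) ((i + 1 : ℕ) * (Real.pi / n))) = ENNReal.ofReal (2 * c) := by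
  have hn0 : (0 : ℝ) < n := by exact_mod_cast hn
  have hpi := Real.pi_pos
  have h1 : eVariationOn (fun t : ℝ => c * (Real.cos (n * t) - 1))
      (Set.Icc (i * (Real.pi / n)) ((i + 1 : ℕ) * (Real.pi / n))) =
      eVariationOn (fun t : ℝ => -(c * Real.cos (n * t - i * Real.pi)))
      (Set.Icc (i * (Real.pi / n)) ((i + 1 : ℕ) * (Real.pi / n))) := by
    apply evar_congr_edist
    intro x _ y _
    rw [edist_dist, edist_dist, Real.dist_eq, Real.dist_eq, Real.cos_sub_nat_mul_pi,
      Real.cos_sub_nat_mul_pi]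
    congr 1
    rcases neg_one_pow_eq_or ℝ i with h | h <;> rw [h]
    · rw [← abs_neg]; congr 1; ring
    · congr 1; ring
  have e0 : (n : ℝ) * (i * (Real.pi / n)) = i * Real.pi := by field_simp
  have e1 : (n : ℝ) * ((i + 1 : ℕ) * (Real.pi / n)) = (i + 1) * Real.pi := by
    push_cast; field_simp
  have hle : (i : ℝ) * (Real.pi / n) ≤ (i + 1 : ℕ) * (Real.pi / n) := by
    push_cast; gcongr; linarith
  have hm : MonotoneOn (fun t : ℝ => -(c * Real.cos (n * t - i * Real.pi)))
      (Set.Icc (i * (Real.pi / n)) ((i + 1 : ℕ) * (Real.pi / n))) := by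
    intro x hx y hy hxy
    have hx1 := mul_le_mul_of_nonneg_left hx.1 hn0.le
    have hy2 := mul_le_mul_of_nonneg_left hy.2 hn0.le
    have hxy' := mul_le_mul_of_nonneg_left hxy hn0.le
    rw [e0] at hx1
    rw [e1] at hy2
    have := Real.cos_le_cos_of_nonneg_of_le_pi (x := n * x - i * Real.pi)
      (y := n * y - i * Real.pi) (by linarith) (by linarith) (by linarith)
    exact neg_le_neg (mul_le_mul_of_nonneg_left this hc)
  have := hm.eVariationOn_eq (Set.left_mem_Icc.2 hle) (Set.right_mem_Icc.2 hle)
  rw [Set.inter_self] at this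
  rw [h1, this, e0, e1]
  congr 1
  have : ((i : ℝ) + 1) * Real.pi - i * Real.pi = Real.pi := by ring
  rw [this]
  simp
  ring

/-- The total variation of `x ↦ 2^{1-2n}(b-a)ⁿ[Tₙ((2x-a-b)/(b-a)) − 1]` on `[a,b]`
equals `2^{2-2n}(b-a)ⁿ n`. -/
theorem variation_chebyshev_poly (a b : ℝ) (hab : a < b) (n : ℕ) (hn : 1 ≤ n) :
    eVariationOn
        (fun x => (b - a) ^ n / 2 ^ (2 * n - 1) *
          ((Polynomial.Chebyshev.T ℝ n).eval ((2 * x - a - b) / (b - a)) - 1))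
        (Set.Icc a b)
      = ENNReal.ofReal ((b - a) ^ n * n / 2 ^ (2 * n - 2)) := by
  have hn0 : (0 : ℝ) < n := by exact_mod_cast hn
  have hba : 0 < b - a := by linarith
  have hpi := Real.pi_pos
  set c : ℝ := (b - a) ^ n / 2 ^ (2 * n - 1) with hcdef
  have hc : 0 ≤ c := by positivity
  set φ : ℝ → ℝ := fun t => (a + b) / 2 + (b - a) / 2 * Real.cos t with hφ
  have hanti : AntitoneOn φ (Set.Icc 0 Real.pi) := by
    intro x hx y hy hxy
    have := Real.strictAntiOn_cos.antitoneOn hx hy hxy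
    have := mul_le_mul_of_nonneg_left this (by linarith : 0 ≤ (b - a) / 2)
    simp only [hφ]; linarith
  have himg : φ '' Set.Icc 0 Real.pi = Set.Icc a b := by
    ext x
    constructor
    · rintro ⟨t, _, rfl⟩
      have h1 := Real.cos_le_one t
      have h2 := Real.neg_one_le_cos t
      simp only [hφ]
      constructor <;> nlinarith
    · rintro ⟨h1, h2⟩
      refine ⟨Real.arccos ((2 * x - a - b) / (b - a)),
        ⟨Real.arccos_nonneg _, Real.arccos_le_pi _⟩, ?_⟩
      simp only [hφ]
      rw [Real.cos_arccos]
      · field_simp; ring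
      · rw [le_div_iff₀ hba]; linarith
      · rw [div_le_iff₀ hba]; linarith
  rw [← himg, ← eVariationOn.comp_eq_of_antitoneOn _ _ hanti]
  have hcomp : ((fun x => c *
          ((Polynomial.Chebyshev.T ℝ n).eval ((2 * x - a - b) / (b - a)) - 1)) ∘ φ)
      = fun t : ℝ => c * (Real.cos (n * t) - 1) := by
    funext t
    have : (2 * φ t - a - b) / (b - a) = Real.cos t := by
      simp only [hφ]; field_simp; ring
    simp only [Function.comp, this]
    rw [Polynomial.Chebyshev.T_real_cos]
    simp
  rw [hcomp]
  have hI : Monotone (fun i : ℕ => (i : ℝ) * (Real.pi / n)) := by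
    intro i j hij
    have : (i : ℝ) ≤ j := by exact_mod_cast hij
    exact mul_le_mul_of_nonneg_right this (by positivity)
  have hs := eVariationOn.sum' (fun t : ℝ => c * (Real.cos (n * t) - 1)) hI (n := n)
  simp only [evar_piece c hc n hn] at hs
  have e : (n : ℝ) * (Real.pi / n) = Real.pi := by field_simp
  simp only [Nat.cast_zero, zero_mul, e] at hs
  rw [← hs, Finset.sum_const, Finset.card_range, ← ENNReal.ofReal_nsmul]
  congr 1
  obtain ⟨m, rfl⟩ : ∃ m, n = m + 1 := ⟨n - 1, by omega⟩
  have e1 : 2 * (m + 1) - 1 = 2 * m + 1 := by omega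
  have e2 : 2 * (m + 1) - 2 = 2 * m := by omega
  rw [hcdef, e1, e2, nsmul_eq_mul, pow_succ 2 (2 * m)]
  field_simp
end
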